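/- (Uniqueness) Let u and ũ both be solutions of the time-fractional diffusion equation (D_t^α u)(x,t) = ∑_{j=1}^n ∂/∂x_j(p(x) ∂u/∂x_j(x,t)) − q(x)u(x,t) + F(x,t) in Ω_T = G×(0,T) with the same source function F, satisfying the same initial condition u(x,0) = u₀(x) for x ∈ Ḡ and the same boundary condition u(x,t) = v(x,t) for (x,t) ∈ S×[0,T]. Then u = ũ on Ḡ×[0,T]. -/

import Mathlib

/-!
The proof is a maximum principle. If `t` maximizes `f` on `[0, t]`, then integrating the Caputo
integral by parts gives `(D^α f)(t) ≥ t^{-α} (f(t) - f(0)) / Γ(1 - α)`. So at an interior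
maximum `(x, t)` over the times `[0, t]`, where `u(x, t)` exceeds the nonnegative bound `M` of the
initial and boundary values, `D_t^α u` is positive, while `div(p grad u) ≤ 0` and `q u ≥ 0`: this
contradicts the equation when the source is nonpositive. The equation says nothing at `t = T`, so
the bound there comes from continuity. Uniqueness follows by applying the principle with `M = 0`
to the difference of two solutions, in both orders.
-/

open MeasureTheory Set Filter Topology

/-- The Caputo fractional derivative of order `α` of `f` at `t`:
`(D^α f)(t) = (1/Γ(1−α)) ∫₀ᵗ (t−s)^{−α} f'(s) ds`. -/
noncomputable def caputo (α : ℝ) (f : ℝ → ℝ) (t : ℝ) : ℝ :=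
  (1 / Real.Gamma (1 - α)) * ∫ s in (0:ℝ)..t, (t - s) ^ (-α) * deriv f s

/-- The elliptic part `div(p(x) grad w)(x) = ∑_j ∂/∂x_j (p(x) ∂w/∂x_j)(x)`. -/
noncomputable def divPGrad (n : ℕ) (p : (Fin n → ℝ) → ℝ) (w : (Fin n → ℝ) → ℝ)
    (x : Fin n → ℝ) : ℝ :=
  ∑ j : Fin n, fderiv ℝ (fun y => p y * fderiv ℝ w y (Pi.single j 1)) x (Pi.single j 1)

/-- `u` is a (classical) solution of the time-fractional diffusion equation
`(D_t^α u)(x,t) = div(p grad u) − q u + F` in `Ω_T = G × (0,T)`: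
`u ∈ C(Ḡ×[0,T])`, twice continuously differentiable in `x` on `G`, for each `x ∈ G`
the map `t ↦ u(x,t)` is `C¹` on `(0,T]` with integrable derivative, and the equation
holds pointwise in `Ω_T`. -/
def IsSolutionTFDE (n : ℕ) (α T : ℝ) (G : Set (Fin n → ℝ))
    (p q : (Fin n → ℝ) → ℝ) (F : (Fin n → ℝ) → ℝ → ℝ)
    (u : (Fin n → ℝ) → ℝ → ℝ) : Prop :=
  ContinuousOn (fun z : (Fin n → ℝ) × ℝ => u z.1 z.2) (closure G ×ˢ Set.Icc 0 T) ∧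
  (∀ t ∈ Set.Ioo (0:ℝ) T, ContDiffOn ℝ 2 (fun x => u x t) G) ∧
  (∀ x ∈ G, ContDiffOn ℝ 1 (u x) (Set.Ioc 0 T) ∧
    IntervalIntegrable (deriv (u x)) MeasureTheory.volume 0 T) ∧
  (∀ x ∈ G, ∀ t ∈ Set.Ioo (0:ℝ) T,
    caputo α (u x) t = divPGrad n p (fun y => u y t) x - q x * u x t + F x t)

section CaputoExtremum

variable {a b α r : ℝ} {f g : ℝ → ℝ}

theorem intervalIntegrable_sub_rpow_mul (hab : a < b) (hr : -1 < r)
    (hg : ContinuousOn g (Ioc a b)) (hgi : IntervalIntegrable g volume a b) :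
    IntervalIntegrable (fun s => (b - s) ^ r * g s) volume a b := by
  obtain ⟨c, hac, hcb⟩ := exists_between hab
  have away_from_b : IntervalIntegrable (fun s => (b - s) ^ r * g s) volume a c := by
    refine (hgi.mono_set ?_).continuousOn_mul fun s hs => ?_
    · rw [uIcc_of_le hac.le, uIcc_of_le hab.le]
      exact Icc_subset_Icc_right hcb.le
    · rw [uIcc_of_le hac.le] at hs
      have hsb : b - s ≠ 0 := by linarith [hs.2]
      exact (ContinuousAt.rpow_const (by fun_prop) (.inl hsb)).continuousWithinAt
  have near_b : IntervalIntegrable (fun s => (b - s) ^ r * g s) volume c b := by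
    refine IntervalIntegrable.mul_continuousOn ?_ (hg.mono ?_)
    · simpa using (intervalIntegral.intervalIntegrable_rpow' (a := b - c) (b := b - b)
        hr).comp_sub_left b
    · rw [uIcc_of_le hcb.le]
      exact Icc_subset_Ioc hac le_rfl
  exact away_from_b.trans near_b

theorem continuousWithinAt_sub_rpow_neg_mul_sub {s : Set ℝ} (hα1 : α < 1) (hs : s ⊆ Iic b)
    (hf : DifferentiableWithinAt ℝ f s b) :
    ContinuousWithinAt (fun x => (b - x) ^ (-α) * (f x - f b)) s b := by
  have growth : (fun x => f x - f b) =O[𝓝[s] b] fun x => b - x := by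
    simpa only [neg_sub] using hf.hasFDerivWithinAt.isBigO_sub.neg_right
  have power : Tendsto (fun x => (b - x) ^ (-α) * (b - x)) (𝓝[s] b) (𝓝 0) := by
    have hcont : ContinuousAt (fun x => (b - x) ^ (-α + 1)) b :=
      ContinuousAt.rpow_const (by fun_prop) (.inr (by linarith))
    have hlim : Tendsto (fun x => (b - x) ^ (-α + 1)) (𝓝[s] b) (𝓝 0) := by
      simpa [Real.zero_rpow (show -α + 1 ≠ 0 by linarith)] using
        hcont.tendsto.mono_left nhdsWithin_le_nhds
    refine hlim.congr' ?_
    filter_upwards [self_mem_nhdsWithin] with x hx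
    exact Real.rpow_add_one' (sub_nonneg.2 (hs hx)) (by linarith)
  have := ((Asymptotics.isBigO_refl (fun x => (b - x) ^ (-α)) _).mul growth).trans_tendsto power
  simpa only [ContinuousWithinAt, sub_self, mul_zero] using this

theorem continuousOn_sub_rpow_neg_mul_sub (hα1 : α < 1) (hf : ContinuousOn f (Icc a b))
    (hfb : DifferentiableWithinAt ℝ f (Icc a b) b) :
    ContinuousOn (fun x => (b - x) ^ (-α) * (f x - f b)) (Icc a b) := by
  intro x hx
  rcases hx.2.lt_or_eq with hxb | rfl
  · have hpow : ContinuousAt (fun x => (b - x) ^ (-α)) x :=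
      ContinuousAt.rpow_const (by fun_prop) (.inl (sub_pos.2 hxb).ne')
    exact hpow.continuousWithinAt.mul ((hf x hx).sub continuousWithinAt_const)
  · exact continuousWithinAt_sub_rpow_neg_mul_sub hα1 Icc_subset_Iic_self hfb

theorem sub_rpow_neg_mul_sub_le_integral (hα : 0 ≤ α) (hα1 : α < 1) (hab : a ≤ b)
    (hf : ContinuousOn f (Icc a b)) (hfd : DifferentiableOn ℝ f (Ioo a b))
    (hfb : DifferentiableWithinAt ℝ f (Icc a b) b)
    (hfi : IntervalIntegrable (fun s => (b - s) ^ (-α) * deriv f s) volume a b)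
    (hmax : ∀ s ∈ Ioo a b, f s ≤ f b) :
    (b - a) ^ (-α) * (f b - f a) ≤ ∫ s in a..b, (b - s) ^ (-α) * deriv f s := by
  have hderiv : ∀ s ∈ Ioo a b, HasDerivAt (fun s => (b - s) ^ (-α) * (f s - f b))
      (α * (b - s) ^ (-α - 1) * (f s - f b) + (b - s) ^ (-α) * deriv f s) s := by
    intro s hs
    have hpow : HasDerivAt (fun s => (b - s) ^ (-α)) (α * (b - s) ^ (-α - 1)) s := by
      simpa using ((hasDerivAt_id s).const_sub b).rpow_const (p := -α)
        (.inl (sub_pos.2 hs.2).ne')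
    exact hpow.mul ((hfd.differentiableAt (isOpen_Ioo.mem_nhds hs)).hasDerivAt.sub_const _)
  have hle : ∀ s ∈ Ioo a b, α * (b - s) ^ (-α - 1) * (f s - f b) + (b - s) ^ (-α) * deriv f s ≤
      (b - s) ^ (-α) * deriv f s := by
    intro s hs
    have hcoef : 0 ≤ α * (b - s) ^ (-α - 1) :=
      mul_nonneg hα (Real.rpow_nonneg (sub_nonneg.2 hs.2.le) _)
    linarith [mul_nonpos_of_nonneg_of_nonpos hcoef (sub_nonpos.2 (hmax s hs))]
  have key := intervalIntegral.sub_le_integral_of_hasDeriv_right_of_le hab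
    (continuousOn_sub_rpow_neg_mul_sub hα1 hf hfb) (fun s hs => (hderiv s hs).hasDerivWithinAt)
    ((intervalIntegrable_iff_integrableOn_Icc_of_le hab).1 hfi) hle
  calc (b - a) ^ (-α) * (f b - f a)
      = (b - b) ^ (-α) * (f b - f b) - (b - a) ^ (-α) * (f a - f b) := by ring
    _ ≤ _ := key

theorem le_caputo_of_forall_le {t : ℝ} (hα : 0 ≤ α) (hα1 : α < 1) (ht : 0 ≤ t)
    (hf : ContinuousOn f (Icc 0 t)) (hfd : DifferentiableOn ℝ f (Ioo 0 t))
    (hft : DifferentiableWithinAt ℝ f (Icc 0 t) t)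
    (hfi : IntervalIntegrable (fun s => (t - s) ^ (-α) * deriv f s) volume 0 t)
    (hmax : ∀ s ∈ Ioo 0 t, f s ≤ f t) :
    1 / Real.Gamma (1 - α) * (t ^ (-α) * (f t - f 0)) ≤ caputo α f t := by
  have hΓ : 0 < Real.Gamma (1 - α) := Real.Gamma_pos_of_pos (sub_pos.2 hα1)
  refine mul_le_mul_of_nonneg_left ?_ (one_div_pos.2 hΓ).le
  simpa only [sub_zero] using sub_rpow_neg_mul_sub_le_integral hα hα1 ht hf hfd hft hfi hmax

theorem caputo_sub {t : ℝ} (ht : 0 ≤ t)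
    (hf : DifferentiableOn ℝ f (Ioo 0 t)) (hg : DifferentiableOn ℝ g (Ioo 0 t))
    (hfi : IntervalIntegrable (fun s => (t - s) ^ (-α) * deriv f s) volume 0 t)
    (hgi : IntervalIntegrable (fun s => (t - s) ^ (-α) * deriv g s) volume 0 t) :
    caputo α (f - g) t = caputo α f t - caputo α g t := by
  have hintegral : ∫ s in 0..t, (t - s) ^ (-α) * deriv (f - g) s =
      ∫ s in 0..t, ((t - s) ^ (-α) * deriv f s - (t - s) ^ (-α) * deriv g s) := by
    refine intervalIntegral.integral_congr_Ioo_of_le ht fun s hs => ?_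
    have hs' := isOpen_Ioo.mem_nhds hs
    simp only [deriv_sub (hf.differentiableAt hs') (hg.differentiableAt hs'), mul_sub]
  rw [caputo, hintegral, intervalIntegral.integral_sub hfi hgi, mul_sub, caputo, caputo]

end CaputoExtremum

section SecondOrder

theorem deriv_deriv_nonpos_of_isLocalMax {f : ℝ → ℝ} {c : ℝ} (hmax : IsLocalMax f c)
    (hf : ContinuousAt f c) : deriv (deriv f) c ≤ 0 := by
  by_contra! hpos
  -- By the second derivative test `c` is also a local minimum, so `f` is locally constant.
  have hmin : IsLocalMin f c := isLocalMin_of_deriv_deriv_pos hpos hmax.deriv_eq_zero hf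
  have hconst : f =ᶠ[𝓝 c] fun _ => f c := by
    filter_upwards [hmax, hmin] with s hle hge using le_antisymm hle hge
  simp [hconst.deriv.deriv_eq] at hpos

variable {E : Type*} [NormedAddCommGroup E] [NormedSpace ℝ E] {w : E → ℝ} {x : E}

theorem differentiableAt_fderiv_apply_of_contDiffAt (hw : ContDiffAt ℝ 2 w x) (e : E) :
    DifferentiableAt ℝ (fun y => fderiv ℝ w y e) x :=
  ((hw.fderiv_right (m := 1) (by norm_num)).differentiableAt one_ne_zero).clm_apply
    (differentiableAt_const e)

theorem deriv_deriv_comp_add_smul (hw : ContDiffAt ℝ 2 w x) (e : E) :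
    deriv (deriv fun s : ℝ => w (x + s • e)) 0 = fderiv ℝ (fun y => fderiv ℝ w y e) x e := by
  have hline : ∀ s : ℝ, HasDerivAt (fun s : ℝ => x + s • e) e s := fun s => by
    simpa using ((hasDerivAt_id s).smul_const e).const_add x
  have hto : Tendsto (fun s : ℝ => x + s • e) (𝓝 0) (𝓝 x) := by
    simpa using (hline 0).continuousAt.tendsto
  have hfirst : deriv (fun s : ℝ => w (x + s • e)) =ᶠ[𝓝 0]
      fun s => fderiv ℝ w (x + s • e) e := by
    filter_upwards [hto.eventually (hw.eventually (by simp))] with s hs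
    exact ((hs.differentiableAt two_ne_zero).hasFDerivAt.comp_hasDerivAt s (hline s)).deriv
  have hsecond : HasFDerivAt (fun y => fderiv ℝ w y e)
      (fderiv ℝ (fun y => fderiv ℝ w y e) x) (x + (0 : ℝ) • e) := by
    simpa using (differentiableAt_fderiv_apply_of_contDiffAt hw e).hasFDerivAt
  rw [hfirst.deriv_eq]
  exact (hsecond.comp_hasDerivAt (0 : ℝ) (hline 0)).deriv

theorem fderiv_fderiv_apply_nonpos_of_isLocalMax (hw : ContDiffAt ℝ 2 w x)
    (hmax : IsLocalMax w x) (e : E) : fderiv ℝ (fun y => fderiv ℝ w y e) x e ≤ 0 := by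
  have hline : ContinuousAt (fun s : ℝ => x + s • e) 0 := by fun_prop
  rw [← deriv_deriv_comp_add_smul hw e]
  refine deriv_deriv_nonpos_of_isLocalMax ?_ ?_
  · exact IsLocalMax.comp_continuous (by simpa using hmax) hline
  · exact ContinuousAt.comp (by simpa using hw.continuousAt) hline

end SecondOrder

section Elliptic

variable {n : ℕ} {p w z : (Fin n → ℝ) → ℝ} {x : Fin n → ℝ}

theorem divPGrad_sub (hp : DifferentiableAt ℝ p x) (hw : ContDiffAt ℝ 2 w x)
    (hz : ContDiffAt ℝ 2 z x) : divPGrad n p (w - z) x = divPGrad n p w x - divPGrad n p z x := by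
  rw [divPGrad, divPGrad, divPGrad, ← Finset.sum_sub_distrib]
  refine Finset.sum_congr rfl fun j _ => ?_
  have hflux : (fun y => p y * fderiv ℝ (w - z) y (Pi.single j 1)) =ᶠ[𝓝 x]
      fun y => p y * fderiv ℝ w y (Pi.single j 1) - p y * fderiv ℝ z y (Pi.single j 1) := by
    filter_upwards [hw.eventually (by simp), hz.eventually (by simp)] with y hwy hzy
    rw [fderiv_sub (hwy.differentiableAt two_ne_zero) (hzy.differentiableAt two_ne_zero),
      sub_apply, mul_sub]
  rw [hflux.fderiv_eq,
    fderiv_fun_sub (hp.fun_mul (differentiableAt_fderiv_apply_of_contDiffAt hw _))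
      (hp.fun_mul (differentiableAt_fderiv_apply_of_contDiffAt hz _)),
    sub_apply]

theorem divPGrad_nonpos_of_isLocalMax (hp : DifferentiableAt ℝ p x) (hpx : 0 ≤ p x)
    (hw : ContDiffAt ℝ 2 w x) (hmax : IsLocalMax w x) : divPGrad n p w x ≤ 0 := by
  refine Finset.sum_nonpos fun j _ => ?_
  rw [fderiv_fun_mul hp (differentiableAt_fderiv_apply_of_contDiffAt hw _),
    hmax.fderiv_eq_zero]
  simpa using mul_nonpos_of_nonneg_of_nonpos hpx
    (fderiv_fderiv_apply_nonpos_of_isLocalMax hw hmax (Pi.single j 1))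

end Elliptic

theorem exists_interior_forall_le {X : Type*} [TopologicalSpace X] {G : Set X}
    {u : X → ℝ → ℝ} {x₁ : X} {T M t₁ : ℝ} (hG : IsOpen G) (hGc : IsCompact (closure G))
    (hu : ContinuousOn (fun z : X × ℝ => u z.1 z.2) (closure G ×ˢ Icc 0 T))
    (hinit : ∀ x ∈ closure G, u x 0 ≤ M) (hbdry : ∀ x ∈ frontier G, ∀ t ∈ Ioo 0 T, u x t ≤ M)
    (hx₁ : x₁ ∈ closure G) (ht₁ : t₁ ∈ Ico 0 T) (hM : M < u x₁ t₁) :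
    ∃ x ∈ G, ∃ t ∈ Ioo 0 T, M < u x t ∧ ∀ y ∈ closure G, ∀ s ∈ Icc 0 t, u y s ≤ u x t := by
  obtain ⟨⟨x, t⟩, ⟨hx, ht⟩, hmax⟩ := (hGc.prod isCompact_Icc).exists_isMaxOn
    ⟨(x₁, t₁), hx₁, ht₁.1, le_rfl⟩ (hu.mono (prod_mono_right (Icc_subset_Icc_right ht₁.2.le)))
  have hMx : M < u x t := hM.trans_le (hmax (mk_mem_prod hx₁ ⟨ht₁.1, le_rfl⟩))
  have ht0 : 0 < t := ht.1.lt_of_ne (by rintro rfl; exact (hinit x hx).not_gt hMx)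
  have htT : t ∈ Ioo 0 T := ⟨ht0, ht.2.trans_lt ht₁.2⟩
  have hxG : x ∈ G := by
    by_contra hxG
    exact (hbdry x (hG.frontier_eq ▸ ⟨hx, hxG⟩) t htT).not_gt hMx
  exact ⟨x, hxG, t, htT, hMx, fun y hy s hs => hmax (mk_mem_prod hy ⟨hs.1, hs.2.trans ht.2⟩)⟩

section Solutions

variable {n : ℕ} {α T t : ℝ} {G : Set (Fin n → ℝ)} {p q : (Fin n → ℝ) → ℝ}
  {F F' u u' : (Fin n → ℝ) → ℝ → ℝ} {x : Fin n → ℝ}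

namespace IsSolutionTFDE

theorem continuousOn_time (hu : IsSolutionTFDE n α T G p q F u) (hx : x ∈ closure G) :
    ContinuousOn (u x) (Icc 0 T) :=
  hu.1.comp (f := fun s : ℝ => (x, s)) (by fun_prop) fun _ hs => ⟨hx, hs⟩

theorem contDiffAt_space (hu : IsSolutionTFDE n α T G p q F u) (hG : IsOpen G) (hx : x ∈ G)
    (ht : t ∈ Ioo 0 T) : ContDiffAt ℝ 2 (fun y => u y t) x :=
  (hu.2.1 t ht).contDiffAt (hG.mem_nhds hx)

theorem differentiableOn_time (hu : IsSolutionTFDE n α T G p q F u) (hx : x ∈ G) :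
    DifferentiableOn ℝ (u x) (Ioo 0 T) :=
  (hu.2.2.1 x hx).1.differentiableOn_one.mono Ioo_subset_Ioc_self

theorem intervalIntegrable_caputo_integrand (hu : IsSolutionTFDE n α T G p q F u) (hα1 : α < 1)
    (hx : x ∈ G) (ht : t ∈ Ioo 0 T) :
    IntervalIntegrable (fun s => (t - s) ^ (-α) * deriv (u x) s) volume 0 t := by
  obtain ⟨hC1, hint⟩ := hu.2.2.1 x hx
  have hcont : ContinuousOn (deriv (u x)) (Ioo 0 T) :=
    (hC1.mono Ioo_subset_Ioc_self).continuousOn_deriv_of_isOpen isOpen_Ioo le_rfl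
  refine intervalIntegrable_sub_rpow_mul ht.1 (by linarith)
    (hcont.mono (Ioc_subset_Ioo_right ht.2)) (hint.mono_set ?_)
  rw [uIcc_of_le ht.1.le, uIcc_of_le (ht.1.trans ht.2).le]
  exact Icc_subset_Icc_right ht.2.le

theorem sub (hu : IsSolutionTFDE n α T G p q F u) (hu' : IsSolutionTFDE n α T G p q F' u')
    (hα1 : α < 1) (hT : 0 < T) (hG : IsOpen G) (hp : DifferentiableOn ℝ p G) :
    IsSolutionTFDE n α T G p q (F - F') (u - u') := by
  refine ⟨hu.1.sub hu'.1, fun t ht => (hu.2.1 t ht).sub (hu'.2.1 t ht), fun x hx => ⟨?_, ?_⟩,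
    fun x hx t ht => ?_⟩
  · exact (hu.2.2.1 x hx).1.sub (hu'.2.2.1 x hx).1
  · refine ((hu.2.2.1 x hx).2.sub (hu'.2.2.1 x hx).2).congr_uIoo fun s hs => ?_
    rw [uIoo_of_le hT.le] at hs
    have hs' := isOpen_Ioo.mem_nhds hs
    exact (deriv_sub ((hu.differentiableOn_time hx).differentiableAt hs')
      ((hu'.differentiableOn_time hx).differentiableAt hs')).symm
  · have hsub : Ioo 0 t ⊆ Ioo 0 T := Ioo_subset_Ioo_right ht.2.le
    have htime : caputo α ((u - u') x) t = caputo α (u x) t - caputo α (u' x) t :=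
      caputo_sub ht.1.le ((hu.differentiableOn_time hx).mono hsub)
        ((hu'.differentiableOn_time hx).mono hsub)
        (hu.intervalIntegrable_caputo_integrand hα1 hx ht)
        (hu'.intervalIntegrable_caputo_integrand hα1 hx ht)
    have hspace : divPGrad n p (fun y => (u - u') y t) x =
        divPGrad n p (fun y => u y t) x - divPGrad n p (fun y => u' y t) x :=
      divPGrad_sub (hp.differentiableAt (hG.mem_nhds hx)) (hu.contDiffAt_space hG hx ht)
        (hu'.contDiffAt_space hG hx ht)
    rw [htime, hspace, hu.2.2.2 x hx t ht, hu'.2.2.2 x hx t ht]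
    simp only [Pi.sub_apply]
    ring

theorem caputo_pos_of_forall_le (hu : IsSolutionTFDE n α T G p q F u) (hα : 0 ≤ α)
    (hα1 : α < 1) (hx : x ∈ G) (ht : t ∈ Ioo 0 T) (hmax : ∀ s ∈ Icc 0 t, u x s ≤ u x t)
    (hlt : u x 0 < u x t) : 0 < caputo α (u x) t := by
  have hΓ : 0 < Real.Gamma (1 - α) := Real.Gamma_pos_of_pos (sub_pos.2 hα1)
  have htpow : 0 < t ^ (-α) := Real.rpow_pos_of_pos ht.1 _
  calc 0 < 1 / Real.Gamma (1 - α) * (t ^ (-α) * (u x t - u x 0)) :=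
        mul_pos (one_div_pos.2 hΓ) (mul_pos htpow (sub_pos.2 hlt))
    _ ≤ caputo α (u x) t :=
        le_caputo_of_forall_le hα hα1 ht.1.le
          ((hu.continuousOn_time (subset_closure hx)).mono (Icc_subset_Icc_right ht.2.le))
          ((hu.differentiableOn_time hx).mono (Ioo_subset_Ioo_right ht.2.le))
          ((hu.differentiableOn_time hx).differentiableAt
            (isOpen_Ioo.mem_nhds ht)).differentiableWithinAt
          (hu.intervalIntegrable_caputo_integrand hα1 hx ht)
          fun s hs => hmax s (Ioo_subset_Icc_self hs)

theorem le_of_source_nonpos {M : ℝ} (hu : IsSolutionTFDE n α T G p q F u) (hα : 0 ≤ α)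
    (hα1 : α < 1) (hG : IsOpen G) (hGb : Bornology.IsBounded G)
    (hp : DifferentiableOn ℝ p G) (hp0 : ∀ x ∈ G, 0 ≤ p x) (hq0 : ∀ x ∈ G, 0 ≤ q x)
    (hF : ∀ x ∈ G, ∀ t ∈ Ioo 0 T, F x t ≤ 0) (hM : 0 ≤ M)
    (hinit : ∀ x ∈ closure G, u x 0 ≤ M) (hbdry : ∀ x ∈ frontier G, ∀ t ∈ Ioo 0 T, u x t ≤ M) :
    ∀ x ∈ closure G, ∀ t ∈ Icc 0 T, u x t ≤ M := by
  have before_T : ∀ x ∈ closure G, ∀ t ∈ Ico 0 T, u x t ≤ M := by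
    intro x₁ hx₁ t₁ ht₁
    by_contra! hlt
    obtain ⟨x, hx, t, ht, hMx, hmax⟩ := exists_interior_forall_le hG hGb.isCompact_closure hu.1
      hinit hbdry hx₁ ht₁ hlt
    have hxcl : x ∈ closure G := subset_closure hx
    have htime : 0 < caputo α (u x) t :=
      hu.caputo_pos_of_forall_le hα hα1 hx ht (hmax x hxcl) ((hinit x hxcl).trans_lt hMx)
    have hlocal : IsLocalMax (fun y => u y t) x := by
      filter_upwards [hG.mem_nhds hx] with y hy
      exact hmax y (subset_closure hy) t ⟨ht.1.le, le_rfl⟩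
    have hspace : divPGrad n p (fun y => u y t) x ≤ 0 :=
      divPGrad_nonpos_of_isLocalMax (hp.differentiableAt (hG.mem_nhds hx)) (hp0 x hx)
        (hu.contDiffAt_space hG hx ht) hlocal
    linarith [hu.2.2.2 x hx t ht, hF x hx t ht, mul_nonneg (hq0 x hx) (hM.trans hMx.le)]
  intro x hx t ht
  rcases eq_or_ne T 0 with rfl | hT
  · exact (le_antisymm ht.2 ht.1) ▸ hinit x hx
  · have hcl : closure (Ico 0 T) = Icc 0 T := closure_Ico hT.symm
    exact le_on_closure (before_T x hx) (hcl ▸ hu.continuousOn_time hx) continuousOn_const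
      (hcl ▸ ht)

theorem le_of_source_le (hu : IsSolutionTFDE n α T G p q F u)
    (hu' : IsSolutionTFDE n α T G p q F' u') (hα : 0 ≤ α) (hα1 : α < 1) (hT : 0 < T)
    (hG : IsOpen G) (hGb : Bornology.IsBounded G)
    (hp : DifferentiableOn ℝ p G) (hp0 : ∀ x ∈ G, 0 ≤ p x) (hq0 : ∀ x ∈ G, 0 ≤ q x)
    (hF : ∀ x ∈ G, ∀ t ∈ Ioo 0 T, F x t ≤ F' x t) (hinit : ∀ x ∈ closure G, u x 0 ≤ u' x 0)
    (hbdry : ∀ x ∈ frontier G, ∀ t ∈ Ioo 0 T, u x t ≤ u' x t) :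
    ∀ x ∈ closure G, ∀ t ∈ Icc 0 T, u x t ≤ u' x t := fun x hx t ht =>
  sub_nonpos.1 <| (hu.sub hu' hα1 hT hG hp).le_of_source_nonpos hα hα1 hG hGb hp hp0 hq0
    (fun y hy s hs => sub_nonpos.2 (hF y hy s hs)) le_rfl
    (fun y hy => sub_nonpos.2 (hinit y hy))
    (fun y hy s hs => sub_nonpos.2 (hbdry y hy s hs)) x hx t ht

end IsSolutionTFDE

theorem uniqueness_TFDE_general (hα : 0 ≤ α) (hα1 : α < 1) (hT : 0 < T)
    (hG : IsOpen G) (hGb : Bornology.IsBounded G)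
    (hp : DifferentiableOn ℝ p G) (hp0 : ∀ x ∈ G, 0 ≤ p x) (hq0 : ∀ x ∈ G, 0 ≤ q x)
    (hu : IsSolutionTFDE n α T G p q F u) (hu' : IsSolutionTFDE n α T G p q F u')
    (hinit : ∀ x ∈ closure G, u x 0 = u' x 0)
    (hbdry : ∀ x ∈ frontier G, ∀ t ∈ Ioo 0 T, u x t = u' x t) :
    ∀ x ∈ closure G, ∀ t ∈ Icc 0 T, u x t = u' x t := by
  intro x hx t ht
  refine le_antisymm ?_ ?_
  · exact hu.le_of_source_le hu' hα hα1 hT hG hGb hp hp0 hq0 (fun _ _ _ _ => le_rfl)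
      (fun y hy => (hinit y hy).le) (fun y hy s hs => (hbdry y hy s hs).le) x hx t ht
  · exact hu'.le_of_source_le hu hα hα1 hT hG hGb hp hp0 hq0 (fun _ _ _ _ => le_rfl)
      (fun y hy => (hinit y hy).ge) (fun y hy s hs => (hbdry y hy s hs).ge) x hx t ht

end Solutions

/-- Uniqueness: two solutions of the time-fractional diffusion equation
in `Ω_T = G×(0,T)` with the same source `F`, the same initial condition `u₀` on `Ḡ`
and the same boundary condition `v` on `S×[0,T]` coincide on `Ḡ×[0,T]`. -/
theorem uniqueness_TFDE (n : ℕ) (α T : ℝ) (hα : 0 < α) (hα1 : α < 1) (hT : 0 < T)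
    (G : Set (Fin n → ℝ)) (hG : IsOpen G) (hGb : Bornology.IsBounded G)
    (p q : (Fin n → ℝ) → ℝ)
    (hp : ContDiffOn ℝ 1 p (closure G)) (hppos : ∀ x ∈ closure G, 0 < p x)
    (hq : ContinuousOn q (closure G)) (hqnn : ∀ x ∈ closure G, 0 ≤ q x)
    (F : (Fin n → ℝ) → ℝ → ℝ)
    (hF : ContinuousOn (fun z : (Fin n → ℝ) × ℝ => F z.1 z.2) (G ×ˢ Set.Ioo 0 T))
    (u₀ : (Fin n → ℝ) → ℝ) (hu₀ : ContinuousOn u₀ (closure G))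
    (v : (Fin n → ℝ) → ℝ → ℝ)
    (hv : ContinuousOn (fun z : (Fin n → ℝ) × ℝ => v z.1 z.2) (frontier G ×ˢ Set.Icc 0 T))
    (u u' : (Fin n → ℝ) → ℝ → ℝ)
    (hu : IsSolutionTFDE n α T G p q F u) (hu' : IsSolutionTFDE n α T G p q F u')
    (huic : ∀ x ∈ closure G, u x 0 = u₀ x) (hu'ic : ∀ x ∈ closure G, u' x 0 = u₀ x)
    (hubc : ∀ x ∈ frontier G, ∀ t ∈ Set.Icc (0:ℝ) T, u x t = v x t)
    (hu'bc : ∀ x ∈ frontier G, ∀ t ∈ Set.Icc (0:ℝ) T, u' x t = v x t) :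
    ∀ x ∈ closure G, ∀ t ∈ Set.Icc (0:ℝ) T, u x t = u' x t := by
  exact uniqueness_TFDE_general hα.le hα1 hT hG hGb
    (hp.differentiableOn_one.mono subset_closure) (fun x hx => (hppos x (subset_closure hx)).le)
    (fun x hx => hqnn x (subset_closure hx)) hu hu'
    (fun x hx => (huic x hx).trans (hu'ic x hx).symm)
    (fun x hx t ht => (hubc x hx t (Ioo_subset_Icc_self ht)).trans
      (hu'bc x hx t (Ioo_subset_Icc_self ht)).symm)
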